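/- Let D₁ = (ℤ/3ℤ)⁴ with the binary operation a△b = (2a₀+2b₀+a₁a₃b₂+2a₂a₃b₁+2a₁b₂b₃+a₂b₁b₃, 2a₁+2b₁, 2a₂+2b₂, 2a₃+2b₃) for a = (a₀,a₁,a₂,a₃) and b = (b₀,b₁,b₂,b₃). Then D₁(△) is a quasigroup of order 81 that is distributive and symmetric (a△b = b△a and a△(a△b) = b for all a, b), but not medial; moreover, the three-element subquasigroup P = {(0,0,0,c) : c ∈ ℤ/3ℤ} is not normal in D₁(△), so D₁(△) is not hamiltonian. -/

import Mathlib

/-- A (binary operation on a nonempty set is a) quasigroup: all left and right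
translations are bijections. -/
def IsQuasigroup {Q : Type*} (mul : Q → Q → Q) : Prop :=
  Nonempty Q ∧ ∀ a : Q,
    Function.Bijective (fun x => mul a x) ∧ Function.Bijective (fun x => mul x a)

/-- A subquasigroup: a nonempty subset closed under multiplication and under both
divisions (the unique solutions of `a·x = b` and `y·a = b` for `a, b ∈ P` lie in `P`). -/
def IsSubquasigroup {Q : Type*} (mul : Q → Q → Q) (P : Set Q) : Prop :=
  P.Nonempty ∧ ∀ a ∈ P, ∀ b ∈ P,
    mul a b ∈ P ∧ (∀ x, mul a x = b → x ∈ P) ∧ (∀ y, mul y a = b → y ∈ P)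

/-- A normal congruence: an equivalence relation satisfying (C1), (C2), (C3). -/
def IsNormalCongruence {Q : Type*} (mul : Q → Q → Q) (r : Q → Q → Prop) : Prop :=
  Equivalence r ∧
  (∀ a b c d, r a b → r c d → r (mul a c) (mul b d)) ∧
  (∀ a b c d, r a b → r (mul a c) (mul b d) → r c d) ∧
  (∀ a b c d, r c d → r (mul a c) (mul b d) → r a b)

/-- A subquasigroup is normal if it is an equivalence class of some normal congruence. -/
def IsNormalSubquasigroup {Q : Type*} (mul : Q → Q → Q) (P : Set Q) : Prop :=
  IsSubquasigroup mul P ∧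
  ∃ r : Q → Q → Prop, IsNormalCongruence mul r ∧ ∃ a : Q, P = {x | r a x}

/-- A quasigroup is hamiltonian if every subquasigroup is normal. -/
def IsHamiltonian {Q : Type*} (mul : Q → Q → Q) : Prop :=
  ∀ P : Set Q, IsSubquasigroup mul P → IsNormalSubquasigroup mul P

/-- The underlying set of the quasigroup `D₁`: `(ℤ/3ℤ)⁴`. -/
abbrev D₁ : Type := ZMod 3 × ZMod 3 × ZMod 3 × ZMod 3

/-- The operation `△` on `D₁`, where `a = (a₀, a₁, a₂, a₃)`, `b = (b₀, b₁, b₂, b₃)`: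
`a△b = (2a₀+2b₀+a₁a₃b₂+2a₂a₃b₁+2a₁b₂b₃+a₂b₁b₃, 2a₁+2b₁, 2a₂+2b₂, 2a₃+2b₃)`. -/
def triangle (a b : D₁) : D₁ :=
  (2 * a.1 + 2 * b.1 + a.2.1 * a.2.2.2 * b.2.2.1 + 2 * a.2.2.1 * a.2.2.2 * b.2.1
      + 2 * a.2.1 * b.2.2.1 * b.2.2.2 + a.2.2.1 * b.2.1 * b.2.2.2,
   2 * a.2.1 + 2 * b.2.1,
   2 * a.2.2.1 + 2 * b.2.2.1,
   2 * a.2.2.2 + 2 * b.2.2.2)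

/-!
Modulo 3 the operation reads `a△b = -a - b + β(a, b, a - b)`, where
`β(a, b, c) = ((a₁b₂ - a₂b₁)c₃, 0, 0, 0)` is trilinear, alternating in its first two arguments, and
zero whenever one argument is a value of `β`. These properties of `β` alone, in characteristic 3,
make the operation symmetric and distributive.

The cyclic sum `J(x, y, z) = β(x, y, z) + β(y, z, x) + β(z, x, y)` obstructs both mediality and
normality. Up to sign it is the defect of mediality at `0, x, y, z`. Moreover, for all `s` and `t`
the map `p ↦ -p - J(p, s, t)` fixes `0` and is a composite of three translations, so it preserves
every normal subquasigroup containing `0`. On `D₁` the values of `J` lie on the first coordinate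
axis and do not all vanish, which rules out mediality and the normality of the last axis.
-/

/-- A symmetric binary operation: commutative, with involutive left translations. -/
structure IsSymmetricOp {Q : Type*} (mul : Q → Q → Q) : Prop where
  comm (a b : Q) : mul a b = mul b a
  mul_mul_self (a b : Q) : mul a (mul a b) = b

namespace IsSymmetricOp

variable {Q : Type*} {mul : Q → Q → Q}

theorem isQuasigroup [Nonempty Q] (h : IsSymmetricOp mul) : IsQuasigroup mul := by
  have bijective_left (a : Q) : Function.Bijective (mul a) :=
    Function.Involutive.bijective (h.mul_mul_self a)
  exact ⟨‹_›, fun a => ⟨bijective_left a, by simpa only [h.comm _ a] using bijective_left a⟩⟩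

theorem isSubquasigroup (h : IsSymmetricOp mul) {P : Set Q} (hne : P.Nonempty)
    (hmul : ∀ a ∈ P, ∀ b ∈ P, mul a b ∈ P) : IsSubquasigroup mul P := by
  have mem_of_mul_mem {a x : Q} (ha : a ∈ P) (hb : mul a x ∈ P) : x ∈ P :=
    h.mul_mul_self a x ▸ hmul a ha _ hb
  refine ⟨hne, fun a ha b hb => ⟨hmul a ha b hb, fun x hx => ?_, fun y hy => ?_⟩⟩
  · exact mem_of_mul_mem ha (hx ▸ hb)
  · exact mem_of_mul_mem ha (h.comm y a ▸ hy ▸ hb)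

end IsSymmetricOp

theorem right_distrib_of_left_distrib {Q : Type*} {mul : Q → Q → Q}
    (hcomm : ∀ a b, mul a b = mul b a)
    (hleft : ∀ x a b, mul x (mul a b) = mul (mul x a) (mul x b)) (x a b : Q) :
    mul (mul a b) x = mul (mul a x) (mul b x) := by
  rw [hcomm _ x, hleft, hcomm x a, hcomm x b]

theorem IsNormalCongruence.foldl_congr {Q : Type*} {mul : Q → Q → Q} {r : Q → Q → Prop}
    (hr : IsNormalCongruence mul r) {x y : Q} (hxy : r x y) (l : List Q) :
    r (l.foldl mul x) (l.foldl mul y) := by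
  obtain ⟨hequiv, mul_congr, -, -⟩ := hr
  induction l generalizing x y with
  | nil => exact hxy
  | cons c _ ih => exact ih (mul_congr x y c c hxy (hequiv.refl c))

theorem IsNormalSubquasigroup.foldl_mem {Q : Type*} {mul : Q → Q → Q} {P : Set Q}
    (hP : IsNormalSubquasigroup mul P) {p q : Q} (hp : p ∈ P) (hq : q ∈ P) (l : List Q)
    (hl : l.foldl mul p ∈ P) : l.foldl mul q ∈ P := by
  obtain ⟨-, r, hr, a, rfl⟩ := hP
  have hpq : r p q := hr.1.trans (hr.1.symm hp) hq
  exact hr.1.trans hl (hr.foldl_congr hpq l)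

section Twist

variable {V : Type*} [AddCommGroup V] [Module (ZMod 3) V]
  {β : V →ₗ[ZMod 3] V →ₗ[ZMod 3] V →ₗ[ZMod 3] V}

/-- The midpoint operation `-a - b` of a vector space over `𝔽₃`, perturbed by a trilinear map. -/
def twist (β : V →ₗ[ZMod 3] V →ₗ[ZMod 3] V →ₗ[ZMod 3] V) (a b : V) : V :=
  -a - b + β a b (a - b)

/-- The cyclic sum of a trilinear map: the common obstruction to mediality of `twist β` and to
normality of its subquasigroups. -/
def cyclicSum (β : V →ₗ[ZMod 3] V →ₗ[ZMod 3] V →ₗ[ZMod 3] V) (x y z : V) : V :=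
  β x y z + β y z x + β z x y

/-- A trilinear map which is alternating in its first two arguments and vanishes as soon as one
argument is one of its own values (for the second argument this follows from alternation). -/
structure IsCentralAlternating (β : V →ₗ[ZMod 3] V →ₗ[ZMod 3] V →ₗ[ZMod 3] V) : Prop where
  self_eq_zero (x z : V) : β x x z = 0
  apply_value_left (x y z : V) : β (β x y z) = 0
  apply_value_right (u v x y z : V) : β u v (β x y z) = 0

namespace IsCentralAlternating

theorem swap (hβ : IsCentralAlternating β) (x y z : V) : β y x z = -β x y z := by
  have h := hβ.self_eq_zero (x + y) z
  simp only [map_add, LinearMap.add_apply, hβ.self_eq_zero, zero_add, add_zero] at h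
  exact eq_neg_of_add_eq_zero_left h

theorem apply_value_middle (hβ : IsCentralAlternating β) (u x y z w : V) :
    β u (β x y z) w = 0 := by
  rw [hβ.swap, hβ.apply_value_left, LinearMap.zero_apply, LinearMap.zero_apply, neg_zero]

theorem twist_comm (hβ : IsCentralAlternating β) (a b : V) : twist β a b = twist β b a := by
  simp only [twist, map_sub, hβ.swap a b]
  module

theorem twist_twist_self (hβ : IsCentralAlternating β) (a b : V) :
    twist β a (twist β a b) = b := by
  simp only [twist, map_add, map_sub, map_neg, LinearMap.add_apply, LinearMap.sub_apply,
    LinearMap.neg_apply, hβ.self_eq_zero, hβ.apply_value_middle, hβ.apply_value_right]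
  linear_combination (norm := module) -ZModModule.char_nsmul_eq_zero 3 (β a b a)

theorem isSymmetricOp_twist (hβ : IsCentralAlternating β) : IsSymmetricOp (twist β) :=
  ⟨hβ.twist_comm, hβ.twist_twist_self⟩

theorem twist_left_distrib (hβ : IsCentralAlternating β) (x a b : V) :
    twist β x (twist β a b) = twist β (twist β x a) (twist β x b) := by
  simp only [twist, map_add, map_sub, map_neg, LinearMap.add_apply, LinearMap.sub_apply,
    LinearMap.neg_apply, LinearMap.zero_apply, hβ.self_eq_zero, hβ.apply_value_left,
    hβ.apply_value_middle, hβ.apply_value_right, hβ.swap x a]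
  linear_combination (norm := module) -ZModModule.char_nsmul_eq_zero 3 x
    - ZModModule.char_nsmul_eq_zero 3 (β x a a) - ZModModule.char_nsmul_eq_zero 3 (β x b b)

theorem twist_medial_defect (hβ : IsCentralAlternating β) (x y z : V) :
    twist β (twist β 0 x) (twist β y z) - twist β (twist β 0 y) (twist β x z) =
      -cyclicSum β x y z := by
  simp only [twist, cyclicSum, map_add, map_sub, map_neg, map_zero, LinearMap.add_apply,
    LinearMap.sub_apply, LinearMap.neg_apply, LinearMap.zero_apply, hβ.apply_value_middle,
    hβ.apply_value_right, hβ.swap x y, hβ.swap x z]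
  linear_combination (norm := module) ZModModule.char_nsmul_eq_zero 3 (β x y z)

theorem cyclicSum_eq_zero_of_medial (hβ : IsCentralAlternating β)
    (hmedial : ∀ x y u v, twist β (twist β x y) (twist β u v) =
      twist β (twist β x u) (twist β y v)) (x y z : V) : cyclicSum β x y z = 0 := by
  rw [← neg_eq_zero, ← hβ.twist_medial_defect, sub_eq_zero]
  exact hmedial 0 x y z

theorem twist_twist (hβ : IsCentralAlternating β) (p s t : V) :
    twist β (twist β p s) t = p + s - t - β p s (p - s) + β (p + s) t (p + s + t) := by
  simp only [twist, map_add, map_sub, map_neg, LinearMap.add_apply, LinearMap.sub_apply,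
    LinearMap.neg_apply, LinearMap.zero_apply, hβ.apply_value_left, hβ.apply_value_right]
  module

-- The last factor is the one for which the composite of the three translations fixes `0`.
theorem twist_twist_twist (hβ : IsCentralAlternating β) (p s t : V) :
    twist β (twist β (twist β p s) t) (-twist β (twist β 0 s) t) = -p - cyclicSum β p s t := by
  simp only [hβ.twist_twist, zero_add, map_zero, LinearMap.zero_apply, sub_zero]
  simp only [twist, cyclicSum, map_add, map_sub, map_neg, LinearMap.add_apply,
    LinearMap.sub_apply, LinearMap.neg_apply, LinearMap.zero_apply, hβ.self_eq_zero,
    hβ.apply_value_left, hβ.apply_value_middle, hβ.apply_value_right, hβ.swap p t, hβ.swap s t]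
  linear_combination (norm := module) ZModModule.char_nsmul_eq_zero 3 (β p s t)
    - ZModModule.char_nsmul_eq_zero 3 (β p s s) - ZModModule.char_nsmul_eq_zero 3 (β p t t)

theorem neg_sub_cyclicSum_mem (hβ : IsCentralAlternating β) {P : Set V}
    (hP : IsNormalSubquasigroup (twist β) P) (h0 : (0 : V) ∈ P) {p : V} (hp : p ∈ P) (s t : V) :
    -p - cyclicSum β p s t ∈ P := by
  have foldl_eq (q : V) :
      [s, t, -twist β (twist β 0 s) t].foldl (twist β) q = -q - cyclicSum β q s t :=
    hβ.twist_twist_twist q s t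
  rw [← foldl_eq]
  refine hP.foldl_mem h0 hp _ ?_
  rw [foldl_eq]
  simpa [cyclicSum] using h0

end IsCentralAlternating

end Twist

/-- The trilinear map `β` on `(ℤ/3ℤ)⁴` with `triangle = twist β`, found by factoring the cubic part
of `a△b` as `(a₁b₂ - a₂b₁)(a₃ - b₃)`. -/
def triangleForm : D₁ →ₗ[ZMod 3] D₁ →ₗ[ZMod 3] D₁ →ₗ[ZMod 3] D₁ :=
  LinearMap.mk₂ (ZMod 3)
    (fun a b => (a.2.1 * b.2.2.1 - a.2.2.1 * b.2.1) •
      (LinearMap.inl (ZMod 3) (ZMod 3) (ZMod 3 × ZMod 3 × ZMod 3) ∘ₗ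
        LinearMap.snd _ _ _ ∘ₗ LinearMap.snd _ _ _ ∘ₗ LinearMap.snd _ _ _))
    (fun _ _ _ => by simp only [Prod.fst_add, Prod.snd_add]; module)
    (fun _ _ _ => by simp only [Prod.smul_fst, Prod.smul_snd, smul_eq_mul]; module)
    (fun _ _ _ => by simp only [Prod.fst_add, Prod.snd_add]; module)
    (fun _ _ _ => by simp only [Prod.smul_fst, Prod.smul_snd, smul_eq_mul]; module)

theorem triangleForm_apply (a b c : D₁) :
    triangleForm a b c = ((a.2.1 * b.2.2.1 - a.2.2.1 * b.2.1) * c.2.2.2, 0) := by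
  simp [triangleForm]

theorem triangle_eq_twist : triangle = twist triangleForm := by
  have two_eq_neg_one : (2 : ZMod 3) = -1 := by decide
  funext a b
  simp only [twist, triangleForm_apply, triangle, two_eq_neg_one]
  ext <;> simp only [Prod.fst_add, Prod.snd_add, Prod.fst_sub, Prod.snd_sub, Prod.fst_neg,
    Prod.snd_neg, Prod.fst_zero, Prod.snd_zero] <;> ring

theorem triangleForm_isCentralAlternating : IsCentralAlternating triangleForm where
  self_eq_zero x z := by simp [triangleForm_apply, mul_comm x.2.1]
  apply_value_left x y z := by ext <;> simp [triangleForm_apply]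
  apply_value_right u v x y z := by simp [triangleForm_apply]

theorem cyclicSum_triangleForm_fst_ne_zero :
    (cyclicSum triangleForm (0, 0, 0, 1) (0, 1, 0, 0) (0, 0, 1, 0)).1 ≠ 0 := by
  simp [cyclicSum, triangleForm_apply]

/-- The subquasigroup `P = {(0, 0, 0, c)}` of `D₁`. -/
def lastAxis : Set D₁ := {x | x.1 = 0 ∧ x.2.1 = 0 ∧ x.2.2.1 = 0}

theorem lastAxis_eq_range : lastAxis = Set.range fun c : ZMod 3 => ((0, 0, 0, c) : D₁) := by
  ext ⟨x₀, x₁, x₂, x₃⟩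
  simp [lastAxis, eq_comm]

theorem ncard_lastAxis : lastAxis.ncard = 3 := by
  rw [lastAxis_eq_range, Set.ncard_range_of_injective, Nat.card_zmod]
  intro c d h
  simpa using h

theorem triangle_isSymmetricOp : IsSymmetricOp triangle :=
  triangle_eq_twist ▸ triangleForm_isCentralAlternating.isSymmetricOp_twist

theorem triangle_left_distrib (x a b : D₁) :
    triangle x (triangle a b) = triangle (triangle x a) (triangle x b) :=
  triangle_eq_twist ▸ triangleForm_isCentralAlternating.twist_left_distrib x a b

theorem triangle_not_medial :
    ¬ ∀ x y u v : D₁, triangle (triangle x y) (triangle u v)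
        = triangle (triangle x u) (triangle y v) := by
  rw [triangle_eq_twist]
  intro hmedial
  exact cyclicSum_triangleForm_fst_ne_zero (congrArg Prod.fst
    (triangleForm_isCentralAlternating.cyclicSum_eq_zero_of_medial hmedial _ _ _))

theorem lastAxis_isSubquasigroup : IsSubquasigroup triangle lastAxis := by
  refine triangle_isSymmetricOp.isSubquasigroup ⟨0, rfl, rfl, rfl⟩ ?_
  rintro a ⟨ha₀, ha₁, ha₂⟩ b ⟨hb₀, hb₁, hb₂⟩
  simp [lastAxis, triangle, ha₀, ha₁, ha₂, hb₀, hb₁, hb₂]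

theorem lastAxis_not_isNormalSubquasigroup : ¬ IsNormalSubquasigroup triangle lastAxis := by
  rw [triangle_eq_twist]
  intro hnormal
  have hmem := triangleForm_isCentralAlternating.neg_sub_cyclicSum_mem hnormal
    ⟨rfl, rfl, rfl⟩ (p := (0, 0, 0, 1)) ⟨rfl, rfl, rfl⟩ (0, 1, 0, 0) (0, 0, 1, 0)
  exact cyclicSum_triangleForm_fst_ne_zero (by simpa using hmem.1)

/-- `D₁(△)` is a distributive symmetric quasigroup of order 81 which is not medial;
the three-element subquasigroup `P = {(0,0,0,c)}` is not normal in it, hence `D₁(△)`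
is not hamiltonian. -/
theorem D₁_properties :
    IsQuasigroup triangle ∧
    Nat.card D₁ = 81 ∧
    (∀ x a b : D₁, triangle x (triangle a b) = triangle (triangle x a) (triangle x b)) ∧
    (∀ x a b : D₁, triangle (triangle a b) x = triangle (triangle a x) (triangle b x)) ∧
    (∀ a b : D₁, triangle a b = triangle b a) ∧
    (∀ a b : D₁, triangle a (triangle a b) = b) ∧
    ¬ (∀ x y u v : D₁, triangle (triangle x y) (triangle u v)
        = triangle (triangle x u) (triangle y v)) ∧
    (IsSubquasigroup triangle {x : D₁ | x.1 = 0 ∧ x.2.1 = 0 ∧ x.2.2.1 = 0} ∧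
      ({x : D₁ | x.1 = 0 ∧ x.2.1 = 0 ∧ x.2.2.1 = 0}).ncard = 3 ∧
      ¬ IsNormalSubquasigroup triangle {x : D₁ | x.1 = 0 ∧ x.2.1 = 0 ∧ x.2.2.1 = 0}) ∧
    ¬ IsHamiltonian triangle :=
  ⟨triangle_isSymmetricOp.isQuasigroup, by simp, triangle_left_distrib,
    right_distrib_of_left_distrib triangle_isSymmetricOp.comm triangle_left_distrib,
    triangle_isSymmetricOp.comm, triangle_isSymmetricOp.mul_mul_self, triangle_not_medial,
    ⟨lastAxis_isSubquasigroup, ncard_lastAxis, lastAxis_not_isNormalSubquasigroup⟩,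
    fun hamiltonian => lastAxis_not_isNormalSubquasigroup
      (hamiltonian lastAxis lastAxis_isSubquasigroup)⟩
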